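/- The following 19-point positive cubature rule of index 5 with rational data holds on the 3-dimensional simplex: for every homogeneous polynomial f of degree 5 in 4 variables, 3! · ∫_{T^3} f(x_1,x_2,x_3, 1−x_1−x_2−x_3) dx = (16/105)·f(1/4, 1/4, 1/4, 1/4) + (1/70)·avg f over the 4 distinct coordinate permutations of (1, 0, 0, 0) + (4/35)·avg f over the 6 distinct coordinate permutations of (1/2, 1/2, 0, 0) + (81/350)·avg f over the 4 distinct coordinate permutations of (1/3, 1/3, 1/3, 0) + (256/525)·avg f over the 4 distinct coordinate permutations of (5/8, 1/8, 1/8, 1/8), where avg denotes the arithmetic mean of the values of f over the listed points. -/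

import Mathlib

open MeasureTheory Finset

/-- The standard simplex `T^d` in `ℝ^d`. -/
def Td (d : ℕ) : Set (Fin d → ℝ) :=
  {x | (∀ i, 0 ≤ x i) ∧ ∑ i, x i ≤ 1}

/-- The weight function `W_γ(x) = (x_1 ⋯ x_d (1 - |x|₁))^γ` on `T^d`. -/
noncomputable def Wg (d : ℕ) (γ : ℝ) (x : Fin d → ℝ) : ℝ :=
  ((∏ i, x i) * (1 - ∑ i, x i)) ^ γ

/-- The normalization constant `w_γ = Γ((d+1)(γ+1)) / Γ(γ+1)^(d+1)`. -/
noncomputable def wg (d : ℕ) (γ : ℝ) : ℝ :=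
  Real.Gamma ((d + 1) * (γ + 1)) / (Real.Gamma (γ + 1)) ^ (d + 1)

/-- Homogeneous coordinates: `x ↦ (x, 1 - |x|₁) ∈ 𝒯^{d+1}`. -/
noncomputable def lift (d : ℕ) (x : Fin d → ℝ) : Fin (d + 1) → ℝ :=
  Fin.snoc x (1 - ∑ i, x i)

/-- The average of `f` over the set of distinct coordinate permutations of `y`. -/
noncomputable def orbitAvg (d : ℕ) (y : Fin (d + 1) → ℝ) (f : (Fin (d + 1) → ℝ) → ℝ) : ℝ :=
  ((Finset.image (fun σ : Equiv.Perm (Fin (d + 1)) => y ∘ σ) Finset.univ).card : ℝ)⁻¹ *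
    ∑ z ∈ Finset.image (fun σ : Equiv.Perm (Fin (d + 1)) => y ∘ σ) Finset.univ, f z

theorem integral_pow_mul_sub_pow (t : ℝ) (a n : ℕ) :
    ∫ x in (0 : ℝ)..t, x ^ a * (t - x) ^ n
      = (a.factorial * n.factorial : ℝ) / (a + n + 1).factorial * t ^ (a + n + 1) := by
  induction n generalizing a with
  | zero =>
    simp only [pow_zero, mul_one, integral_pow, Nat.factorial_succ, Nat.factorial_zero, add_zero]
    have := Nat.cast_ne_zero (R := ℝ).2 a.factorial_ne_zero
    push_cast
    field_simp
    simp
  | succ n ih =>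
    have key := intervalIntegral.integral_mul_deriv_eq_deriv_mul (a := 0) (b := t)
      (u := fun x => (t - x) ^ (n + 1)) (u' := fun x => -((n + 1 : ℝ) * (t - x) ^ n))
      (v := fun x => x ^ (a + 1) / (a + 1 : ℝ)) (v' := fun x => x ^ a)
      (fun x _ => by
        refine (((hasDerivAt_id x).const_sub t).fun_pow (n + 1)).congr_deriv ?_
        simp [mul_comm])
      (fun x _ => by
        have h : (a + 1 : ℝ) ≠ 0 := by positivity
        refine (((hasDerivAt_id x).fun_pow (a + 1)).div_const (a + 1 : ℝ)).congr_deriv ?_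
        simp [field])
      (Continuous.intervalIntegrable (by fun_prop) _ _)
      (Continuous.intervalIntegrable (by fun_prop) _ _)
    have hcongr : ∀ x : ℝ, -((n + 1 : ℝ) * (t - x) ^ n) * (x ^ (a + 1) / (a + 1 : ℝ))
        = -((n + 1 : ℝ) / (a + 1)) * (x ^ (a + 1) * (t - x) ^ n) := fun x => by ring
    simp only [hcongr, intervalIntegral.integral_const_mul, ih] at key
    simp only [mul_comm (_ ^ a)]
    rw [key, show a + 1 + n + 1 = a + (n + 1) + 1 by ring]
    simp only [Nat.factorial_succ a, Nat.factorial_succ n]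
    have := Nat.cast_ne_zero (R := ℝ).2 (a + (n + 1) + 1).factorial_ne_zero
    push_cast
    field_simp
    simp

/-- The simplex of vectors with nonnegative coordinates of sum at most `t`. -/
def scaledSimplex (d : ℕ) (t : ℝ) : Set (Fin d → ℝ) :=
  {x | (∀ i, 0 ≤ x i) ∧ ∑ i, x i ≤ t}

theorem isCompact_scaledSimplex (d : ℕ) (t : ℝ) : IsCompact (scaledSimplex d t) := by
  refine (isCompact_Icc (a := (0 : Fin d → ℝ)) (b := fun _ => t)).of_isClosed_subset ?_ ?_
  · refine (isClosed_le continuous_const continuous_id : IsClosed {x : Fin d → ℝ | 0 ≤ x}).inter ?_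
    exact isClosed_le (continuous_finsetSum _ fun i _ => continuous_apply i) continuous_const
  · rintro x ⟨h0, h1⟩
    exact ⟨h0, fun i => (Finset.single_le_sum (fun j _ => h0 j) (Finset.mem_univ i)).trans h1⟩

theorem measurableSet_scaledSimplex (d : ℕ) (t : ℝ) : MeasurableSet (scaledSimplex d t) :=
  (isCompact_scaledSimplex d t).isClosed.measurableSet

theorem cons_mem_scaledSimplex {d : ℕ} {t y : ℝ} {x : Fin d → ℝ} :
    (Fin.cons y x : Fin (d + 1) → ℝ) ∈ scaledSimplex (d + 1) t
      ↔ 0 ≤ y ∧ x ∈ scaledSimplex d (t - y) := by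
  simp [scaledSimplex, Fin.forall_fin_succ, Fin.sum_univ_succ, and_assoc, le_sub_iff_add_le']

/-- The Dirichlet integral over the simplex of size `t`. -/
theorem integral_scaledSimplex {d : ℕ} (a : Fin d → ℕ) (n : ℕ) {t : ℝ} (ht : 0 ≤ t) :
    ∫ x in scaledSimplex d t, (∏ i, x i ^ a i) * (t - ∑ i, x i) ^ n
      = ((∏ i, (a i).factorial : ℕ) * n.factorial : ℝ) / (∑ i, a i + n + d).factorial
        * t ^ (∑ i, a i + n + d) := by
  induction d generalizing t with
  | zero =>
    have h : scaledSimplex 0 t = Set.univ := by ext; simp [scaledSimplex, ht]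
    have hn := Nat.cast_ne_zero (R := ℝ).2 n.factorial_ne_zero
    simp [h, hn, volume_pi, Measure.pi_of_empty _ (0 : Fin 0 → ℝ)]
  | succ d ih =>
    set g : (Fin (d + 1) → ℝ) → ℝ := fun x => (∏ i, x i ^ a i) * (t - ∑ i, x i) ^ n with hg
    have hint : Integrable ((scaledSimplex (d + 1) t).indicator g) :=
      (integrable_indicator_iff (measurableSet_scaledSimplex _ _)).2
        ((by fun_prop : Continuous g).continuousOn.integrableOn_compact
          (isCompact_scaledSimplex _ _))
    have hmp := (volume_preserving_piFinSuccAbove (fun _ : Fin (d + 1) => ℝ) 0).symm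
    rw [← integral_indicator (measurableSet_scaledSimplex _ _),
      ← hmp.integral_comp', Measure.volume_eq_prod, integral_prod]
    rotate_left
    · exact (hmp.integrable_comp_emb (MeasurableEquiv.measurableEmbedding _)).2 hint
    have hinner : ∀ y : ℝ, ∫ x : Fin d → ℝ, (scaledSimplex (d + 1) t).indicator g
        ((MeasurableEquiv.piFinSuccAbove (fun _ : Fin (d + 1) => ℝ) 0).symm (y, x))
        = (Set.Icc 0 t).indicator (fun y => y ^ a 0 *
          (((∏ i : Fin d, (a i.succ).factorial : ℕ) * n.factorial : ℝ)
            / (∑ i : Fin d, a i.succ + n + d).factorial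
            * (t - y) ^ (∑ i : Fin d, a i.succ + n + d))) y := by
      intro y
      have hcons : ∀ x : Fin d → ℝ,
          (MeasurableEquiv.piFinSuccAbove (fun _ : Fin (d + 1) => ℝ) 0).symm (y, x)
            = Fin.cons y x := fun x => by
        simp [MeasurableEquiv.piFinSuccAbove, Fin.insertNthEquiv]
      simp only [hcons]
      by_cases hy : y ∈ Set.Icc 0 t
      · rw [Set.indicator_of_mem hy, ← ih (fun i => a i.succ) (sub_nonneg.2 hy.2),
          ← integral_const_mul, ← integral_indicator (measurableSet_scaledSimplex _ _)]
        refine integral_congr_ae (.of_forall fun x => ?_)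
        by_cases hx : x ∈ scaledSimplex d (t - y)
        · simp only [Set.indicator_of_mem hx,
            Set.indicator_of_mem (cons_mem_scaledSimplex.2 ⟨hy.1, hx⟩)]
          simp [hg, Fin.prod_univ_succ, Fin.sum_univ_succ, sub_sub, mul_assoc]
        · simp only [Set.indicator_of_notMem hx, Set.indicator_of_notMem
            (fun h => hx (cons_mem_scaledSimplex.1 h).2 : Fin.cons y x ∉ scaledSimplex (d + 1) t)]
      · rw [Set.indicator_of_notMem hy]
        refine integral_eq_zero_of_ae (.of_forall fun x => Set.indicator_of_notMem (fun h => hy ?_) _)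
        obtain ⟨h0, h1, h2⟩ := cons_mem_scaledSimplex.1 h
        exact ⟨h0, sub_nonneg.1 ((Finset.sum_nonneg fun i _ => h1 i).trans h2)⟩
    rw [integral_congr_ae (.of_forall hinner), integral_indicator measurableSet_Icc,
      integral_Icc_eq_integral_Ioc, ← intervalIntegral.integral_of_le ht]
    set N := ∑ i : Fin d, a i.succ + n + d
    have hcomm : ∀ (y C : ℝ), y ^ a 0 * (C * (t - y) ^ N) = C * (y ^ a 0 * (t - y) ^ N) :=
      fun y C => by ring
    simp only [hcomm, intervalIntegral.integral_const_mul, integral_pow_mul_sub_pow]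
    rw [Fin.prod_univ_succ, Fin.sum_univ_succ,
      show a 0 + ∑ i : Fin d, a i.succ + n + (d + 1) = a 0 + N + 1 by omega]
    have := Nat.cast_ne_zero (R := ℝ).2 N.factorial_ne_zero
    push_cast
    field_simp

theorem integral_Td_prod_lift (d : ℕ) (a : Fin (d + 1) → ℕ) :
    ∫ x in Td d, ∏ i, lift d x i ^ a i
      = (∏ i, (a i).factorial : ℕ) / ((∑ i, a i + d).factorial : ℝ) := by
  have h := integral_scaledSimplex (fun i : Fin d => a i.castSucc) (a (Fin.last d)) zero_le_one
  simp only [one_pow, mul_one] at h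
  simp only [Fin.prod_univ_castSucc, Fin.sum_univ_castSucc, lift, Fin.snoc_castSucc, Fin.snoc_last]
  push_cast at h ⊢
  exact h

theorem continuous_lift (d : ℕ) : Continuous (lift d) := by
  unfold lift
  refine continuous_pi fun i => ?_
  induction i using Fin.lastCases with
  | last => simp only [Fin.snoc_last]; fun_prop
  | cast i => simp only [Fin.snoc_castSucc]; fun_prop

theorem integral_Td_eval_lift (d : ℕ) (f : MvPolynomial (Fin (d + 1)) ℝ) :
    ∫ x in Td d, MvPolynomial.eval (lift d x) f
      = ∑ m ∈ f.support, f.coeff m *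
        ((∏ i, (m i).factorial : ℕ) / ((∑ i, m i + d).factorial : ℝ)) := by
  simp only [MvPolynomial.eval_eq']
  rw [integral_finsetSum]
  · simp only [integral_const_mul, integral_Td_prod_lift]
  · intro m _
    have hl := continuous_lift d
    refine (Continuous.continuousOn ?_).integrableOn_compact (isCompact_scaledSimplex d 1)
    fun_prop

/-- The orbit average of a two-valued vector is an average over subsets of the index set. -/
theorem orbitAvg_ite (d : ℕ) (p : Fin (d + 1) → Prop) [DecidablePred p] {a b : ℝ} (hab : a ≠ b)
    (F : (Fin (d + 1) → ℝ) → ℝ) {S : Finset (Finset (Fin (d + 1)))}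
    (hS : Finset.univ.image (fun σ : Equiv.Perm (Fin (d + 1)) =>
      Finset.univ.filter fun i => p (σ i)) = S) :
    orbitAvg d (fun i => if p i then a else b) F
      = (S.card : ℝ)⁻¹ * ∑ s ∈ S, F (fun i => if i ∈ s then a else b) := by
  have hinj : Function.Injective
      (fun (s : Finset (Fin (d + 1))) (i : Fin (d + 1)) => if i ∈ s then a else b) := by
    intro s t hst
    ext i
    have := congrFun hst i
    by_cases hs : i ∈ s <;> by_cases ht : i ∈ t <;> simp_all
  have himg : Finset.univ.image (fun σ : Equiv.Perm (Fin (d + 1)) =>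
      (fun i => if p i then a else b) ∘ σ)
      = S.image (fun s i => if i ∈ s then a else b) := by
    rw [← hS, Finset.image_image]
    congr 1
    ext σ i
    simp
  rw [orbitAvg, himg, Finset.card_image_of_injective _ hinj, Finset.sum_image hinj.injOn]

/-- A 19-point positive cubature rule of index `5` with rational data on `T^3`. -/
theorem cubature_T3_index_five_rational :
    ∀ f : MvPolynomial (Fin 4) ℝ, f.IsHomogeneous 5 →
      (Nat.factorial 3 : ℝ) * ∫ x in Td 3, MvPolynomial.eval (lift 3 x) f
        = (16 / 105) * MvPolynomial.eval (fun _ => (1 / 4 : ℝ)) f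
          + (1 / 70) * orbitAvg 3 (fun i => if (i : ℕ) = 0 then 1 else 0)
              (fun z => MvPolynomial.eval z f)
          + (4 / 35) * orbitAvg 3 (fun i => if (i : ℕ) < 2 then 1 / 2 else 0)
              (fun z => MvPolynomial.eval z f)
          + (81 / 350) * orbitAvg 3 (fun i => if (i : ℕ) < 3 then 1 / 3 else 0)
              (fun z => MvPolynomial.eval z f)
          + (256 / 525) * orbitAvg 3 (fun i => if (i : ℕ) = 0 then 5 / 8 else 1 / 8)
              (fun z => MvPolynomial.eval z f) := by
  intro f hf
  rw [integral_Td_eval_lift,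
    orbitAvg_ite 3 _ one_ne_zero _ (S := {{0}, {1}, {2}, {3}}) (by decide),
    orbitAvg_ite 3 _ (by norm_num) _
      (S := {{0, 1}, {0, 2}, {0, 3}, {1, 2}, {1, 3}, {2, 3}}) (by decide),
    orbitAvg_ite 3 _ (by norm_num) _
      (S := {{0, 1, 2}, {0, 1, 3}, {0, 2, 3}, {1, 2, 3}}) (by decide),
    orbitAvg_ite 3 _ (by norm_num) _ (S := {{0}, {1}, {2}, {3}}) (by decide)]
  simp only [MvPolynomial.eval_eq', Finset.sum_comm (t := f.support), Finset.mul_sum,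
    ← Finset.sum_add_distrib]
  refine Finset.sum_congr rfl fun m hm => ?_
  have hdeg : m 0 + m 1 + m 2 + m 3 = 5 := by
    have h := hf (MvPolynomial.mem_support_iff.1 hm)
    rw [Pi.one_def, ← Finsupp.degree_eq_weight_one, Finsupp.degree_eq_sum] at h
    simpa [Fin.sum_univ_four] using h
  simp only [mul_left_comm _ (f.coeff m), ← Finset.mul_sum, ← mul_add]
  congr 1
  have hprod : ∀ F : Fin (3 + 1) → ℝ, ∏ i, F i = F 0 * F 1 * F 2 * F 3 := Fin.prod_univ_four
  have hfact : ∏ i, (m i).factorial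
      = (m 0).factorial * (m 1).factorial * (m 2).factorial * (m 3).factorial :=
    Fin.prod_univ_four _
  have hsum : ∑ i, m i = 5 := by rw [← hdeg]; exact Fin.sum_univ_four _
  simp only [hprod, hfact, hsum]
  repeat rw [Finset.sum_insert (by decide)]
  repeat rw [Finset.card_insert_of_notMem (by decide)]
  simp [Fin.ext_iff, -one_div]
  generalize m 0 = a at *
  generalize m 1 = b at *
  generalize m 2 = c at *
  generalize m 3 = e at *
  have ha : a ≤ 5 := by omega
  have hb : b ≤ 5 := by omega
  have hc : c ≤ 5 := by omega
  obtain rfl : e = 5 - a - b - c := by omega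
  interval_cases a <;> interval_cases b <;> interval_cases c <;>
    first
    | omega
    | norm_num [Nat.factorial]
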